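/- Let μ be a probability mass function on T₁ with 0 < β := Σ_τ μ(τ)·deg(τ) < ∞, let η₁ be the law on T₁ with degree distribution Q and i.i.d. marks, where Q has finite nonzero mean, assume μ is absolutely continuous with respect to η₁, and assume μ̄^{1,o} is symmetric (μ̄^{1,o}((a,y),(b,y′)) = μ̄^{1,o}((b,y′),(a,y)) for all a,b ∈ 𝒳, y,y′ ∈ 𝒴). Then, as an identity of elements of [0,∞], H(μ ‖ η₁) − (β/2)·H(μ̄^{1,o} ‖ η̄₁^{1,o}) = (1/2)·( H(μ ‖ μ̌) + H(μ ‖ μ̂) ); here H(μ̄^{1,o} ‖ η̄₁^{1,o}) is finite, H(μ ‖ η₁) = ∞ if and only if the right-hand side is ∞, and when H(μ ‖ η₁) < ∞ the identity holds in ℝ. -/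

import Mathlib

open scoped BigOperators ENNReal Classical

noncomputable section

/-- Depth-1 rooted marked trees: the root mark together with the multiset of
(vertex mark, edge mark toward the root, edge mark at the root) triples of the
neighbors of the root. -/
abbrev T1 (𝒳 𝒴 : Type) : Type := 𝒳 × Multiset (𝒳 × 𝒴 × 𝒴)

section Defs

variable {𝒳 𝒴 : Type} [Fintype 𝒳] [Fintype 𝒴] [DecidableEq 𝒳] [DecidableEq 𝒴]

/-- Degree of the root of a depth-1 tree. -/
def deg (τ : T1 𝒳 𝒴) : ℕ := Multiset.card τ.2

/-- Symmetrized edge-mark distribution `ξ̄(y, y') = (ξ(y, y') + ξ(y', y)) / 2`. -/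
def xiBar (ξ : 𝒴 × 𝒴 → ℝ) (y y' : 𝒴) : ℝ := (ξ (y, y') + ξ (y', y)) / 2

/-- Multinomial coefficient `card m ! / ∏ₛ (multiplicity of s in m)!`. -/
def ordCoeff (m : Multiset (𝒳 × 𝒴 × 𝒴)) : ℝ :=
  (Nat.factorial (Multiset.card m) : ℝ) /
    ∏ s ∈ m.toFinset, (Nat.factorial (m.count s) : ℝ)

/-- The law `η₁` on `T1` with root-degree distribution `Q` and i.i.d. marks:
`η₁ (x, m) = ν x · Q (card m) · (card m)!/∏ₛ count s !· ∏_{(a,y,y') ∈ m} ν a · ξ̄ y y'`. -/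
def eta1 (ν : 𝒳 → ℝ) (ξ : 𝒴 × 𝒴 → ℝ) (Q : ℕ → ℝ) (τ : T1 𝒳 𝒴) : ℝ :=
  ν τ.1 * Q (Multiset.card τ.2) * ordCoeff τ.2 *
    (τ.2.map fun p => ν p.1 * xiBar ξ p.2.1 p.2.2).prod

/-- Mean root degree `β = ∑_τ μ τ · deg τ`. -/
def meanDeg (μ : T1 𝒳 𝒴 → ℝ) : ℝ := ∑' τ : T1 𝒳 𝒴, μ τ * (deg τ : ℝ)

/-- The neighbor–root marginal `μ̄^{1,o}`:
`μ̄^{1,o} ((a,y), (b,y')) = (1/β) ∑_{m} μ (b, m) · (multiplicity of (a,y,y') in m)`. -/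
def nbrRoot (μ : T1 𝒳 𝒴 → ℝ) (p : (𝒳 × 𝒴) × (𝒳 × 𝒴)) : ℝ :=
  (1 / meanDeg μ) *
    ∑' m : Multiset (𝒳 × 𝒴 × 𝒴), μ (p.2.1, m) * (m.count (p.1.1, p.1.2, p.2.2) : ℝ)

/-- First marginal `μ̄¹` of `μ̄^{1,o}`. -/
def marg1 (μ : T1 𝒳 𝒴 → ℝ) (u : 𝒳 × 𝒴) : ℝ := ∑ v : 𝒳 × 𝒴, nbrRoot μ (u, v)

/-- Second marginal `μ̄ᵒ` of `μ̄^{1,o}`. -/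
def margO (μ : T1 𝒳 𝒴 → ℝ) (v : 𝒳 × 𝒴) : ℝ := ∑ u : 𝒳 × 𝒴, nbrRoot μ (u, v)

/-- Conditional law `μ̄^{1|o} (u | v) = μ̄^{1,o}(u,v) / μ̄ᵒ(v)` (and `0` if `μ̄ᵒ(v) = 0`). -/
def condNbr (μ : T1 𝒳 𝒴 → ℝ) (u v : 𝒳 × 𝒴) : ℝ :=
  if 0 < margO μ v then nbrRoot μ (u, v) / margO μ v else 0

/-- `μ̌ (x, m) = η₁ (x, m) · ∏_{(a,y,y') ∈ m} μ̄¹(a,y) / η̄₁¹(a,y)` (product with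
multiplicity; in Lean a ratio with zero denominator is `0`). -/
def muCheck (ν : 𝒳 → ℝ) (ξ : 𝒴 × 𝒴 → ℝ) (Q : ℕ → ℝ) (μ : T1 𝒳 𝒴 → ℝ) (τ : T1 𝒳 𝒴) : ℝ :=
  eta1 ν ξ Q τ *
    (τ.2.map fun p => marg1 μ (p.1, p.2.1) / marg1 (eta1 ν ξ Q) (p.1, p.2.1)).prod

/-- `μ̂ (x, m) = η₁ (x, m) · ∏_{(a,y,y') ∈ m} μ̄^{1|o}((a,y)|(x,y')) / η̄₁^{1|o}((a,y)|(x,y'))`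
(product with multiplicity; a ratio with zero denominator is `0`). -/
def muHat (ν : 𝒳 → ℝ) (ξ : 𝒴 × 𝒴 → ℝ) (Q : ℕ → ℝ) (μ : T1 𝒳 𝒴 → ℝ) (τ : T1 𝒳 𝒴) : ℝ :=
  eta1 ν ξ Q τ *
    (τ.2.map fun p =>
      condNbr μ (p.1, p.2.1) (τ.1, p.2.2) /
        condNbr (eta1 ν ξ Q) (p.1, p.2.1) (τ.1, p.2.2)).prod

end Defs

/-- Relative entropy `H(p ‖ q) = ∑ₛ p s * log (p s / q s)` of probability mass
functions, with value `∞` when `p` is not absolutely continuous with respect to `q`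
(or the defining series diverges); `0·log 0 = 0` is automatic since `Real.log 0 = 0`. -/
def relEnt {S : Type*} (p q : S → ℝ) : ℝ≥0∞ :=
  if (∀ s, q s = 0 → p s = 0) ∧ Summable (fun s => p s * Real.log (p s / q s)) then
    ENNReal.ofReal (∑' s, p s * Real.log (p s / q s))
  else ⊤


lemma ordCoeff_eq_countPerms {𝒳 𝒴 : Type} [DecidableEq 𝒳] [DecidableEq 𝒴]
    (m : Multiset (𝒳 × 𝒴 × 𝒴)) : ordCoeff m = (m.countPerms : ℝ) := by
  have h := Nat.multinomial_spec m.toFinsupp.support m.toFinsupp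
  have h2 : ∑ i ∈ m.toFinset, m.count i = Multiset.card m := Multiset.toFinset_sum_count_eq m
  simp only [Multiset.toFinsupp_support, Multiset.toFinsupp_apply, h2] at h
  unfold ordCoeff Multiset.countPerms
  rw [Finsupp.multinomial_eq, Multiset.toFinsupp_support, ← h]
  push_cast
  rw [mul_comm, mul_div_assoc, div_self, mul_one]
  exact Finset.prod_ne_zero_iff.2 fun s _ => by positivity

lemma ordCoeff_pos {𝒳 𝒴 : Type} [DecidableEq 𝒳] [DecidableEq 𝒴]
    (m : Multiset (𝒳 × 𝒴 × 𝒴)) : 0 < ordCoeff m := by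
  unfold ordCoeff
  have : 0 < ∏ s ∈ m.toFinset, (Nat.factorial (m.count s) : ℝ) :=
    Finset.prod_pos fun s _ => by positivity
  positivity

lemma ordCoeff_cons {𝒳 𝒴 : Type} [DecidableEq 𝒳] [DecidableEq 𝒴]
    (s : 𝒳 × 𝒴 × 𝒴) (m : Multiset (𝒳 × 𝒴 × 𝒴)) :
    ordCoeff (s ::ₘ m) * ((s ::ₘ m).count s : ℝ) = ((Multiset.card m + 1 : ℕ) : ℝ) * ordCoeff m := by
  have h1 : ∀ t : Multiset (𝒳 × 𝒴 × 𝒴), t.toFinset ⊆ insert s m.toFinset →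
      ∏ s ∈ t.toFinset, (Nat.factorial (t.count s) : ℝ) =
      ∏ s ∈ insert s m.toFinset, (Nat.factorial (t.count s) : ℝ) := by
    intro t ht
    refine Finset.prod_subset ht fun x _ hx => ?_
    rw [Multiset.mem_toFinset] at hx
    simp [Multiset.count_eq_zero_of_notMem hx]
  unfold ordCoeff
  rw [h1 (s ::ₘ m) (by simp), h1 m (Finset.subset_insert _ _)]
  rw [← Finset.mul_prod_erase _ _ (Finset.mem_insert_self s m.toFinset),
    ← Finset.mul_prod_erase _ _ (Finset.mem_insert_self s m.toFinset)]
  have h2 : ∏ x ∈ (insert s m.toFinset).erase s, (Nat.factorial ((s ::ₘ m).count x) : ℝ) =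
      ∏ x ∈ (insert s m.toFinset).erase s, (Nat.factorial (m.count x) : ℝ) := by
    refine Finset.prod_congr rfl fun x hx => ?_
    rw [Multiset.count_cons_of_ne (Finset.ne_of_mem_erase hx)]
  rw [h2]
  have h3 : (∏ x ∈ (insert s m.toFinset).erase s, (Nat.factorial (m.count x) : ℝ)) ≠ 0 :=
    Finset.prod_ne_zero_iff.2 fun s _ => by positivity
  rw [Multiset.count_cons_self, Multiset.card_cons, Nat.factorial_succ, Nat.factorial_succ]
  push_cast
  have h4 : (m.count s : ℝ) + 1 ≠ 0 := by positivity
  have h5 : ((m.count s).factorial : ℝ) ≠ 0 := by positivity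
  field_simp

lemma hasSum_multiset {𝒳 𝒴 : Type} [Fintype 𝒳] [Fintype 𝒴] [DecidableEq 𝒳] [DecidableEq 𝒴]
    (w : 𝒳 × 𝒴 × 𝒴 → ℝ) (hw : ∀ s, 0 ≤ w s) (c : ℕ → ℝ) (hc : ∀ k, 0 ≤ c k) (a : ℝ)
    (h : HasSum (fun k => c k * (∑ s, w s) ^ k) a) :
    HasSum (fun m : Multiset (𝒳 × 𝒴 × 𝒴) =>
      c (Multiset.card m) * ordCoeff m * (m.map w).prod) a := by
  set F := fun m : Multiset (𝒳 × 𝒴 × 𝒴) => c (Multiset.card m) * ordCoeff m * (m.map w).prod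
    with hF
  have hF0 : ∀ m, 0 ≤ F m := fun m =>
    mul_nonneg (mul_nonneg (hc _) (ordCoeff_pos m).le)
      (Multiset.prod_nonneg (by
        intro b hb
        obtain ⟨s, _, rfl⟩ := Multiset.mem_map.1 hb
        exact hw s))
  let e : (Σ k, Sym (𝒳 × 𝒴 × 𝒴) k) ≃ Multiset (𝒳 × 𝒴 × 𝒴) :=
    Equiv.sigmaFiberEquiv (Multiset.card)
  have hfib : ∀ k, HasSum (fun m : Sym (𝒳 × 𝒴 × 𝒴) k => (F ∘ e) ⟨k, m⟩)
      (c k * (∑ s, w s) ^ k) := by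
    intro k
    have h1 := Finset.sum_pow (s := (Finset.univ : Finset (𝒳 × 𝒴 × 𝒴))) w k
    rw [h1, Finset.sym_univ, Finset.mul_sum]
    have : ∀ m : Sym (𝒳 × 𝒴 × 𝒴) k, (F ∘ e) ⟨k, m⟩ =
        c k * ((m.1.countPerms : ℝ) * (m.1.map w).prod) := by
      intro m
      have h2 : (F ∘ e) ⟨k, m⟩ = F m.1 := rfl
      rw [h2, hF]
      simp only [ordCoeff_eq_countPerms, m.2, mul_assoc]
    simp_rw [this]
    exact hasSum_fintype _
  rw [← e.hasSum_iff]
  refine HasSum.sigma_of_hasSum h hfib ?_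
  refine (summable_sigma_of_nonneg (f := F ∘ e) (fun x => hF0 _)).2 ?_
  refine ⟨fun k => (hfib k).summable, ?_⟩
  simp_rw [fun k => (hfib k).tsum_eq]
  exact h.summable

lemma hasSum_prod_fintype {X M : Type} [Fintype X] [DecidableEq X] (f : X × M → ℝ) (a : X → ℝ)
    (h : ∀ x, HasSum (fun m => f (x, m)) (a x)) : HasSum f (∑ x, a x) := by
  have h1 : ∀ x, HasSum (fun τ : X × M => if τ.1 = x then f τ else 0) (a x) := by
    intro x
    have hi : Function.Injective (fun m : M => (x, m)) := fun m m' h => by simpa using h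
    rw [← hi.hasSum_iff]
    · simpa [Function.comp_def] using h x
    · rintro ⟨y, m⟩ hy
      have : y ≠ x := by rintro rfl; exact hy ⟨m, rfl⟩
      simp [this]
  have h2 := hasSum_sum (s := Finset.univ) fun x _ => h1 x
  simpa using h2

lemma relEnt_tsum_nonneg {S : Type*} (p q : S → ℝ) (hp : ∀ s, 0 ≤ p s) (hq : ∀ s, 0 ≤ q s)
    (hp1 : HasSum p 1) (hq1 : Summable q) (hq2 : ∑' s, q s ≤ 1)
    (habs : ∀ s, q s = 0 → p s = 0) (hs : Summable (fun s => p s * Real.log (p s / q s))) :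
    0 ≤ ∑' s, p s * Real.log (p s / q s) := by
  have h1 : ∑' s, (p s - q s) ≤ ∑' s, p s * Real.log (p s / q s) := by
    refine (hp1.summable.sub hq1).tsum_le_tsum (fun s => ?_) hs
    by_cases h0 : p s = 0
    · simp [h0, hq s]
    have hps : 0 < p s := lt_of_le_of_ne (hp s) (Ne.symm h0)
    have hqs : 0 < q s := lt_of_le_of_ne (hq s) fun h => h0 (habs s h.symm)
    have := Real.one_sub_inv_le_log_of_pos (div_pos hps hqs)
    calc p s - q s = p s * (1 - (p s / q s)⁻¹) := by field_simp
      _ ≤ _ := mul_le_mul_of_nonneg_left this hps.le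
  rw [hp1.summable.tsum_sub hq1, hp1.tsum_eq] at h1
  linarith

/-- `∑_m μ (x, m) · count s m`. -/
def cnt {𝒳 𝒴 : Type} [DecidableEq 𝒳] [DecidableEq 𝒴] (μ : T1 𝒳 𝒴 → ℝ) (x : 𝒳)
    (s : 𝒳 × 𝒴 × 𝒴) : ℝ := ∑' m : Multiset (𝒳 × 𝒴 × 𝒴), μ (x, m) * (m.count s : ℝ)

section
set_option linter.unusedSectionVars false
variable {𝒳 𝒴 : Type} [Fintype 𝒳] [Fintype 𝒴] [DecidableEq 𝒳] [DecidableEq 𝒴]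

lemma summable_cnt (μ : T1 𝒳 𝒴 → ℝ) (hμ0 : ∀ τ, 0 ≤ μ τ)
    (hβfin : Summable fun τ : T1 𝒳 𝒴 => μ τ * (deg τ : ℝ)) (x : 𝒳) (s : 𝒳 × 𝒴 × 𝒴) :
    Summable fun m : Multiset (𝒳 × 𝒴 × 𝒴) => μ (x, m) * (m.count s : ℝ) := by
  have hi : Function.Injective (fun m : Multiset (𝒳 × 𝒴 × 𝒴) => (x, m)) :=
    fun m m' h => by simpa using h
  refine Summable.of_nonneg_of_le (fun m => mul_nonneg (hμ0 _) (by positivity)) (fun m => ?_)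
    (hβfin.comp_injective hi)
  refine mul_le_mul_of_nonneg_left ?_ (hμ0 _)
  exact_mod_cast Multiset.count_le_card s m

lemma map_sum_eq (m : Multiset (𝒳 × 𝒴 × 𝒴)) (L : 𝒳 × 𝒴 × 𝒴 → ℝ) :
    (m.map L).sum = ∑ s, (m.count s : ℝ) * L s := by
  rw [Finset.sum_multiset_map_count]
  simp only [nsmul_eq_mul]
  refine Finset.sum_subset (Finset.subset_univ _) fun s _ hs => ?_
  rw [Multiset.mem_toFinset] at hs
  simp [Multiset.count_eq_zero_of_notMem hs]

lemma hasSum_lin (μ : T1 𝒳 𝒴 → ℝ) (hμ0 : ∀ τ, 0 ≤ μ τ)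
    (hβfin : Summable fun τ : T1 𝒳 𝒴 => μ τ * (deg τ : ℝ)) (L : 𝒳 → 𝒳 × 𝒴 × 𝒴 → ℝ) :
    HasSum (fun τ : T1 𝒳 𝒴 => μ τ * (τ.2.map (L τ.1)).sum) (∑ x, ∑ s, cnt μ x s * L x s) := by
  refine hasSum_prod_fintype _ _ fun x => ?_
  have h := hasSum_sum (s := Finset.univ) fun s _ =>
    ((summable_cnt μ hμ0 hβfin x s).hasSum).mul_right (L x s)
  refine h.congr_fun ?_ |> fun h => h
  intro m
  simp only [map_sum_eq, Finset.mul_sum, mul_assoc]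

lemma sum_reindex (F : 𝒳 → 𝒳 × 𝒴 × 𝒴 → ℝ) :
    ∑ x, ∑ s, F x s = ∑ p : (𝒳 × 𝒴) × (𝒳 × 𝒴), F p.2.1 (p.1.1, p.1.2, p.2.2) := by
  rw [← Fintype.sum_prod_type']
  let e : (𝒳 × 𝒴) × (𝒳 × 𝒴) ≃ 𝒳 × (𝒳 × 𝒴 × 𝒴) :=
    ⟨fun p => (p.2.1, (p.1.1, p.1.2, p.2.2)), fun q => ((q.2.1, q.2.2.1), (q.1, q.2.2.2)),
      fun _ => rfl, fun _ => rfl⟩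
  exact (e.sum_comp fun q => F q.1 q.2).symm

lemma tilt (μ η : T1 𝒳 𝒴 → ℝ) (hμ0 : ∀ τ, 0 ≤ μ τ)
    (hβfin : Summable fun τ : T1 𝒳 𝒴 => μ τ * (deg τ : ℝ))
    (habs : ∀ τ, η τ = 0 → μ τ = 0) (g : 𝒳 → 𝒳 × 𝒴 × 𝒴 → ℝ)
    (hg : ∀ τ, μ τ ≠ 0 → ∀ s ∈ τ.2, 0 < g τ.1 s) (κ : T1 𝒳 𝒴 → ℝ)
    (hκ : ∀ τ, κ τ = η τ * (τ.2.map (g τ.1)).prod) :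
    (∀ τ, κ τ = 0 → μ τ = 0) ∧
    (Summable (fun τ => μ τ * Real.log (μ τ / κ τ)) ↔
      Summable (fun τ => μ τ * Real.log (μ τ / η τ))) ∧
    (Summable (fun τ => μ τ * Real.log (μ τ / η τ)) →
      ∑' τ, μ τ * Real.log (μ τ / κ τ) = ∑' τ, μ τ * Real.log (μ τ / η τ)
        - ∑ x, ∑ s, cnt μ x s * Real.log (g x s)) := by
  have hprod : ∀ τ, μ τ ≠ 0 → 0 < (τ.2.map (g τ.1)).prod := by
    intro τ h
    refine Multiset.prod_pos ?_
    intro a ha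
    obtain ⟨s, hs, rfl⟩ := Multiset.mem_map.1 ha
    exact hg τ h s hs
  have hlin := hasSum_lin μ hμ0 hβfin (fun x s => Real.log (g x s))
  have heq : (fun τ => μ τ * Real.log (μ τ / κ τ)) = fun τ => μ τ * Real.log (μ τ / η τ)
      - μ τ * (τ.2.map (fun s => Real.log (g τ.1 s))).sum := by
    funext τ
    by_cases h : μ τ = 0
    · simp [h]
    have hη : η τ ≠ 0 := fun h' => h (habs τ h')
    have hl : Real.log ((τ.2.map (g τ.1)).prod) =
        (τ.2.map (fun s => Real.log (g τ.1 s))).sum := by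
      have h1 := hg τ h
      generalize τ.2 = m at h1
      induction m using Multiset.induction with
      | empty => simp
      | cons a m ih =>
        have hp : 0 < (m.map (g τ.1)).prod := by
          refine Multiset.prod_pos ?_
          intro b hb
          obtain ⟨s, hs, rfl⟩ := Multiset.mem_map.1 hb
          exact h1 s (Multiset.mem_cons_of_mem hs)
        rw [Multiset.map_cons, Multiset.prod_cons, Multiset.map_cons, Multiset.sum_cons,
          Real.log_mul (h1 a (Multiset.mem_cons_self a m)).ne' hp.ne',
          ih fun s hs => h1 s (Multiset.mem_cons_of_mem hs)]
    rw [hκ, ← hl, Real.log_div h (mul_ne_zero hη (hprod τ h).ne'),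
      Real.log_mul hη (hprod τ h).ne', Real.log_div h hη]
    ring
  refine ⟨fun τ h => ?_, ?_, fun hs => ?_⟩
  · by_contra h'
    rw [hκ] at h
    rcases mul_eq_zero.1 h with h | h
    · exact h' (habs τ h)
    · exact (hprod τ h').ne' h
  · rw [heq]
    refine ⟨fun h => ?_, fun h => h.sub hlin.summable⟩
    simpa using h.add hlin.summable
  · rw [heq, hs.tsum_sub hlin.summable, hlin.tsum_eq]

lemma nbrRoot_eq (μ : T1 𝒳 𝒴 → ℝ) (p : (𝒳 × 𝒴) × (𝒳 × 𝒴)) :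
    nbrRoot μ p = 1 / meanDeg μ * cnt μ p.2.1 (p.1.1, p.1.2, p.2.2) := rfl

lemma cnt_nonneg (μ : T1 𝒳 𝒴 → ℝ) (hμ0 : ∀ τ, 0 ≤ μ τ) (x : 𝒳) (s : 𝒳 × 𝒴 × 𝒴) :
    0 ≤ cnt μ x s := tsum_nonneg fun m => mul_nonneg (hμ0 _) (by positivity)

lemma cnt_pos (μ : T1 𝒳 𝒴 → ℝ) (hμ0 : ∀ τ, 0 ≤ μ τ)
    (hβfin : Summable fun τ : T1 𝒳 𝒴 => μ τ * (deg τ : ℝ)) (τ : T1 𝒳 𝒴) (h : μ τ ≠ 0)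
    (s : 𝒳 × 𝒴 × 𝒴) (hs : s ∈ τ.2) : 0 < cnt μ τ.1 s := by
  refine (summable_cnt μ hμ0 hβfin τ.1 s).tsum_pos
    (fun m => mul_nonneg (hμ0 _) (by positivity)) τ.2 ?_
  have h1 : 0 < μ τ := lt_of_le_of_ne (hμ0 τ) (Ne.symm h)
  have h2 : 0 < τ.2.count s := Multiset.count_pos.2 hs
  exact mul_pos h1 (by exact_mod_cast h2)

lemma sum_nbrRoot (μ : T1 𝒳 𝒴 → ℝ) (hμ0 : ∀ τ, 0 ≤ μ τ)
    (hβfin : Summable fun τ : T1 𝒳 𝒴 => μ τ * (deg τ : ℝ)) (hβpos : 0 < meanDeg μ) :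
    ∑ p, nbrRoot μ p = 1 := by
  have h := (hasSum_lin μ hμ0 hβfin (fun _ _ => 1)).tsum_eq
  simp only [nbrRoot_eq, ← Finset.mul_sum]
  rw [← sum_reindex (fun x s => cnt μ x s)]
  simp only [mul_one, Multiset.map_const', Multiset.sum_replicate, nsmul_eq_mul] at h
  rw [← h]
  exact one_div_mul_cancel hβpos.ne'

/-- the law of a single neighbour triple -/
def wgt (ν : 𝒳 → ℝ) (ξ : 𝒴 × 𝒴 → ℝ) (p : 𝒳 × 𝒴 × 𝒴) : ℝ := ν p.1 * xiBar ξ p.2.1 p.2.2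

lemma xiBar_nonneg (ξ : 𝒴 × 𝒴 → ℝ) (hξ0 : ∀ p, 0 ≤ ξ p) (y y' : 𝒴) : 0 ≤ xiBar ξ y y' := by
  unfold xiBar
  linarith [hξ0 (y, y'), hξ0 (y', y)]

lemma xiBar_symm (ξ : 𝒴 × 𝒴 → ℝ) (y y' : 𝒴) : xiBar ξ y y' = xiBar ξ y' y := by
  unfold xiBar
  ring

lemma sum_xiBar (ξ : 𝒴 × 𝒴 → ℝ) (hξ1 : ∑ p : 𝒴 × 𝒴, ξ p = 1) :
    ∑ y, ∑ y', xiBar ξ y y' = 1 := by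
  unfold xiBar
  simp only [← Finset.sum_div, Finset.sum_add_distrib]
  rw [Finset.sum_comm (f := fun y y' => ξ (y', y)), ← Fintype.sum_prod_type' (f := fun y y' => ξ (y, y'))]
  simp only [Prod.mk.eta, hξ1]
  norm_num

lemma wgt_nonneg (ν : 𝒳 → ℝ) (hν0 : ∀ x, 0 ≤ ν x) (ξ : 𝒴 × 𝒴 → ℝ) (hξ0 : ∀ p, 0 ≤ ξ p)
    (s : 𝒳 × 𝒴 × 𝒴) : 0 ≤ wgt ν ξ s := mul_nonneg (hν0 _) (xiBar_nonneg ξ hξ0 _ _)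

lemma sum_wgt (ν : 𝒳 → ℝ) (hν1 : ∑ x, ν x = 1) (ξ : 𝒴 × 𝒴 → ℝ)
    (hξ1 : ∑ p : 𝒴 × 𝒴, ξ p = 1) : ∑ s, wgt ν ξ s = 1 := by
  simp only [wgt, Fintype.sum_prod_type, ← Finset.mul_sum, sum_xiBar ξ hξ1, mul_one, hν1]

lemma eta1_eq (ν : 𝒳 → ℝ) (ξ : 𝒴 × 𝒴 → ℝ) (Q : ℕ → ℝ) (τ : T1 𝒳 𝒴) :
    eta1 ν ξ Q τ = ν τ.1 * Q (Multiset.card τ.2) * ordCoeff τ.2 * (τ.2.map (wgt ν ξ)).prod := rfl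

lemma eta1_nonneg (ν : 𝒳 → ℝ) (hν0 : ∀ x, 0 ≤ ν x) (ξ : 𝒴 × 𝒴 → ℝ) (hξ0 : ∀ p, 0 ≤ ξ p)
    (Q : ℕ → ℝ) (hQ0 : ∀ k, 0 ≤ Q k) (τ : T1 𝒳 𝒴) : 0 ≤ eta1 ν ξ Q τ := by
  rw [eta1_eq]
  refine mul_nonneg (mul_nonneg (mul_nonneg (hν0 _) (hQ0 _)) (ordCoeff_pos _).le)
    (Multiset.prod_nonneg ?_)
  intro a ha
  obtain ⟨s, _, rfl⟩ := Multiset.mem_map.1 ha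
  exact wgt_nonneg ν hν0 ξ hξ0 s

lemma eta1_deg (ν : 𝒳 → ℝ) (hν0 : ∀ x, 0 ≤ ν x) (hν1 : ∑ x, ν x = 1)
    (ξ : 𝒴 × 𝒴 → ℝ) (hξ0 : ∀ p, 0 ≤ ξ p) (hξ1 : ∑ p : 𝒴 × 𝒴, ξ p = 1)
    (Q : ℕ → ℝ) (hQ0 : ∀ k, 0 ≤ Q k) (hQm : Summable fun k : ℕ => (k : ℝ) * Q k) :
    HasSum (fun τ : T1 𝒳 𝒴 => eta1 ν ξ Q τ * (deg τ : ℝ)) (∑' k : ℕ, (k : ℝ) * Q k) := by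
  have h : ∀ x, HasSum (fun m : Multiset (𝒳 × 𝒴 × 𝒴) => eta1 ν ξ Q (x, m) * (deg (x, m) : ℝ))
      (ν x * ∑' k : ℕ, (k : ℝ) * Q k) := by
    intro x
    have h1 := hasSum_multiset (wgt ν ξ) (wgt_nonneg ν hν0 ξ hξ0) (fun k => ν x * (k * Q k))
      (fun k => mul_nonneg (hν0 x) (mul_nonneg (by positivity) (hQ0 k)))
      (ν x * ∑' k : ℕ, (k : ℝ) * Q k)
      (by simpa [sum_wgt ν hν1 ξ hξ1] using hQm.hasSum.mul_left (ν x))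
    refine h1.congr_fun ?_ |> fun h => h
    intro m
    simp only [eta1_eq, deg]
    ring
  have h2 := hasSum_prod_fintype (fun τ : T1 𝒳 𝒴 => eta1 ν ξ Q τ * (deg τ : ℝ)) _ h
  rwa [← Finset.sum_mul, hν1, one_mul] at h2

lemma eta1_cnt (ν : 𝒳 → ℝ) (hν0 : ∀ x, 0 ≤ ν x) (hν1 : ∑ x, ν x = 1)
    (ξ : 𝒴 × 𝒴 → ℝ) (hξ0 : ∀ p, 0 ≤ ξ p) (hξ1 : ∑ p : 𝒴 × 𝒴, ξ p = 1)
    (Q : ℕ → ℝ) (hQ0 : ∀ k, 0 ≤ Q k) (hQm : Summable fun k : ℕ => (k : ℝ) * Q k)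
    (x : 𝒳) (s : 𝒳 × 𝒴 × 𝒴) :
    cnt (eta1 ν ξ Q) x s = ν x * wgt ν ξ s * ∑' k : ℕ, (k : ℝ) * Q k := by
  refine HasSum.tsum_eq ?_
  have hi : Function.Injective (fun m : Multiset (𝒳 × 𝒴 × 𝒴) => s ::ₘ m) :=
    fun m m' h => by simpa using h
  rw [← hi.hasSum_iff]
  · have hQ' : HasSum (fun k : ℕ => ((k + 1 : ℕ) : ℝ) * Q (k + 1)) (∑' k : ℕ, (k : ℝ) * Q k) := by
      have := (hasSum_nat_add_iff' (f := fun k : ℕ => (k : ℝ) * Q k) 1).2 hQm.hasSum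
      simpa using this
    have h1 := hasSum_multiset (wgt ν ξ) (wgt_nonneg ν hν0 ξ hξ0)
      (fun k => ν x * wgt ν ξ s * (((k + 1 : ℕ) : ℝ) * Q (k + 1)))
      (fun k => mul_nonneg (mul_nonneg (hν0 x) (wgt_nonneg ν hν0 ξ hξ0 s))
        (mul_nonneg (by positivity) (hQ0 _)))
      (ν x * wgt ν ξ s * ∑' k : ℕ, (k : ℝ) * Q k)
      (by simpa [sum_wgt ν hν1 ξ hξ1] using hQ'.mul_left (ν x * wgt ν ξ s))
    refine h1.congr_fun ?_ |> fun h => h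
    intro m
    have h2 := ordCoeff_cons s m
    simp only [eta1_eq, Function.comp, Multiset.map_cons, Multiset.prod_cons, Multiset.card_cons]
    linear_combination (ν x * wgt ν ξ s * Q (Multiset.card m + 1) * (m.map (wgt ν ξ)).prod) * h2
  · intro m hm
    have : s ∉ m := fun h => hm ⟨m.erase s, Multiset.cons_erase h⟩
    simp [Multiset.count_eq_zero_of_notMem this]

lemma subprob (ν : 𝒳 → ℝ) (hν0 : ∀ x, 0 ≤ ν x) (hν1 : ∑ x, ν x = 1)
    (ξ : 𝒴 × 𝒴 → ℝ) (hξ0 : ∀ p, 0 ≤ ξ p)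
    (Q : ℕ → ℝ) (hQ0 : ∀ k, 0 ≤ Q k) (hQ1 : HasSum Q 1)
    (g : 𝒳 → 𝒳 × 𝒴 × 𝒴 → ℝ) (hg : ∀ x s, 0 ≤ g x s)
    (hg1 : ∀ x, ν x ≠ 0 → ∑ s, wgt ν ξ s * g x s ≤ 1) (κ : T1 𝒳 𝒴 → ℝ)
    (hκ : ∀ τ, κ τ = eta1 ν ξ Q τ * (τ.2.map (g τ.1)).prod) :
    (∀ τ, 0 ≤ κ τ) ∧ Summable κ ∧ ∑' τ, κ τ ≤ 1 := by
  have hW0 : ∀ x, 0 ≤ ∑ s, wgt ν ξ s * g x s := fun x =>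
    Finset.sum_nonneg fun s _ => mul_nonneg (wgt_nonneg ν hν0 ξ hξ0 s) (hg x s)
  have hfib : ∀ x, ∃ a, HasSum (fun m => κ (x, m)) a ∧ a ≤ ν x := by
    intro x
    by_cases hx : ν x = 0
    · refine ⟨0, ?_, hx.ge⟩
      have : (fun m => κ (x, m)) = fun _ => 0 := by
        funext m
        simp [hκ, eta1_eq, hx]
      rw [this]
      exact hasSum_zero
    · have hle : ∀ k, ν x * Q k * (∑ s, wgt ν ξ s * g x s) ^ k ≤ ν x * Q k := fun k =>
        mul_le_of_le_one_right (mul_nonneg (hν0 x) (hQ0 k)) (pow_le_one₀ (hW0 x) (hg1 x hx))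
      have hs : Summable fun k => ν x * Q k * (∑ s, wgt ν ξ s * g x s) ^ k :=
        Summable.of_nonneg_of_le
          (fun k => mul_nonneg (mul_nonneg (hν0 x) (hQ0 k)) (pow_nonneg (hW0 x) k)) hle
          (hQ1.summable.mul_left (ν x))
      have h1 := hasSum_multiset (fun s => wgt ν ξ s * g x s)
        (fun s => mul_nonneg (wgt_nonneg ν hν0 ξ hξ0 s) (hg x s)) (fun k => ν x * Q k)
        (fun k => mul_nonneg (hν0 x) (hQ0 k)) _ hs.hasSum
      refine ⟨_, ?_, (hasSum_le hle hs.hasSum (hQ1.mul_left (ν x))).trans (mul_one _).le⟩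
      refine h1.congr_fun ?_ |> fun h => h
      intro m
      simp only [hκ, eta1_eq, Multiset.prod_map_mul]
      ring
  choose a ha ha' using hfib
  have h := hasSum_prod_fintype κ a ha
  refine ⟨fun τ => ?_, h.summable, ?_⟩
  · rw [hκ]
    refine mul_nonneg (eta1_nonneg ν hν0 ξ hξ0 Q hQ0 τ) (Multiset.prod_nonneg ?_)
    intro b hb
    obtain ⟨s, _, rfl⟩ := Multiset.mem_map.1 hb
    exact hg _ s
  · rw [h.tsum_eq, ← hν1]
    exact Finset.sum_le_sum fun x _ => ha' x


lemma relEnt_of {S : Type*} (p q : S → ℝ) (habs : ∀ s, q s = 0 → p s = 0)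
    (hs : Summable (fun s => p s * Real.log (p s / q s)))
    (h0 : 0 ≤ ∑' s, p s * Real.log (p s / q s)) :
    relEnt p q ≠ ⊤ ∧ (relEnt p q).toReal = ∑' s, p s * Real.log (p s / q s) := by
  unfold relEnt
  rw [if_pos ⟨habs, hs⟩]
  exact ⟨ENNReal.ofReal_ne_top, ENNReal.toReal_ofReal h0⟩

lemma relEnt_top {S : Type*} (p q : S → ℝ)
    (hs : ¬ Summable (fun s => p s * Real.log (p s / q s))) : relEnt p q = ⊤ := by
  unfold relEnt
  rw [if_neg fun h => hs h.2]

lemma eta1_nbrRoot (ν : 𝒳 → ℝ) (hν0 : ∀ x, 0 ≤ ν x) (hν1 : ∑ x, ν x = 1)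
    (ξ : 𝒴 × 𝒴 → ℝ) (hξ0 : ∀ p, 0 ≤ ξ p) (hξ1 : ∑ p : 𝒴 × 𝒴, ξ p = 1)
    (Q : ℕ → ℝ) (hQ0 : ∀ k, 0 ≤ Q k) (hQm : Summable fun k : ℕ => (k : ℝ) * Q k)
    (hQpos : 0 < ∑' k : ℕ, (k : ℝ) * Q k) (p : (𝒳 × 𝒴) × (𝒳 × 𝒴)) :
    nbrRoot (eta1 ν ξ Q) p = ν p.2.1 * (ν p.1.1 * xiBar ξ p.1.2 p.2.2) := by
  have h1 : meanDeg (eta1 (𝒳 := 𝒳) (𝒴 := 𝒴) ν ξ Q) = ∑' k : ℕ, (k : ℝ) * Q k :=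
    (eta1_deg ν hν0 hν1 ξ hξ0 hξ1 Q hQ0 hQm).tsum_eq
  rw [nbrRoot_eq, eta1_cnt ν hν0 hν1 ξ hξ0 hξ1 Q hQ0 hQm, h1]
  have := hQpos.ne'
  simp only [wgt]
  field_simp

lemma check_sum (ν : 𝒳 → ℝ) (hν1 : ∑ x, ν x = 1) (ξ : 𝒴 × 𝒴 → ℝ)
    (m mη : 𝒳 × 𝒴 → ℝ) (hm : ∀ u, 0 ≤ m u) (hm1 : ∑ u, m u = 1)
    (hη : ∀ u, mη u = ν u.1 * ∑ y', xiBar ξ u.2 y') :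
    ∑ s : 𝒳 × 𝒴 × 𝒴, wgt ν ξ s * (m (s.1, s.2.1) / mη (s.1, s.2.1)) ≤ 1 := by
  rw [← hm1]
  simp only [Fintype.sum_prod_type, wgt]
  refine Finset.sum_le_sum fun a _ => Finset.sum_le_sum fun y _ => ?_
  rw [← Finset.sum_mul, ← Finset.mul_sum, hη]
  by_cases h : ν a * ∑ y', xiBar ξ y y' = 0
  · simp [h, hm]
  · rw [mul_div_cancel₀ _ h]

lemma hat_sum (ν : 𝒳 → ℝ) (hν0 : ∀ x, 0 ≤ ν x) (ξ : 𝒴 × 𝒴 → ℝ) (hξ0 : ∀ p, 0 ≤ ξ p)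
    (hξ1 : ∑ p : 𝒴 × 𝒴, ξ p = 1) (x : 𝒳)
    (c cη : 𝒳 × 𝒴 → 𝒴 → ℝ) (hc : ∀ u y, 0 ≤ c u y) (hc1 : ∀ y, ∑ u, c u y ≤ 1)
    (hη : ∀ u y', cη u y' = ν u.1 * xiBar ξ u.2 y' / ∑ y, xiBar ξ y y') :
    ∑ s : 𝒳 × 𝒴 × 𝒴, wgt ν ξ s * (c (s.1, s.2.1) s.2.2 / cη (s.1, s.2.1) s.2.2) ≤ 1 := by
  have hD : ∀ y', 0 ≤ ∑ y, xiBar ξ y y' := fun y' =>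
    Finset.sum_nonneg fun y _ => xiBar_nonneg ξ hξ0 y y'
  have hterm : ∀ s : 𝒳 × 𝒴 × 𝒴, wgt ν ξ s * (c (s.1, s.2.1) s.2.2 / cη (s.1, s.2.1) s.2.2) ≤
      (∑ y, xiBar ξ y s.2.2) * c (s.1, s.2.1) s.2.2 := by
    intro s
    rw [hη]
    simp only [wgt]
    by_cases h : ν s.1 * xiBar ξ s.2.1 s.2.2 = 0
    · simp only [h, zero_mul]
      exact mul_nonneg (hD _) (hc _ _)
    · refine le_of_eq ?_
      rw [div_div_eq_mul_div, mul_div_cancel₀ _ h, mul_comm]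
  refine (Finset.sum_le_sum fun s _ => hterm s).trans ?_
  calc ∑ s : 𝒳 × 𝒴 × 𝒴, (∑ y, xiBar ξ y s.2.2) * c (s.1, s.2.1) s.2.2
      = ∑ y', (∑ y, xiBar ξ y y') * ∑ u, c u y' := by
        simp only [Fintype.sum_prod_type, Finset.mul_sum]
        rw [Finset.sum_comm' (t' := Finset.univ) (s' := fun _ => Finset.univ) (by simp)]
        rw [Finset.sum_comm]
        conv_rhs => rw [Finset.sum_comm]; enter [2, a]; rw [Finset.sum_comm]
    _ ≤ ∑ y', (∑ y, xiBar ξ y y') * 1 :=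
        Finset.sum_le_sum fun y' _ => mul_le_mul_of_nonneg_left (hc1 y') (hD y')
    _ = 1 := by
        simp only [mul_one]
        rw [Finset.sum_comm, sum_xiBar ξ hξ1]

/-- The finite-dimensional identity for symmetric laws. -/
lemma fin_identity {U : Type} [Fintype U] (π ρ : U × U → ℝ) (hπ0 : ∀ p, 0 ≤ π p)
    (hρ0 : ∀ p, 0 ≤ ρ p) (hπs : ∀ u v, π (u, v) = π (v, u)) (hρs : ∀ u v, ρ (u, v) = ρ (v, u))
    (habs : ∀ p, ρ p = 0 → π p = 0) :
    ∑ p : U × U, π p * Real.log ((∑ v, π (p.1, v)) / ∑ v, ρ (p.1, v)) +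
    ∑ p : U × U, π p * Real.log
      ((if 0 < ∑ u, π (u, p.2) then π p / ∑ u, π (u, p.2) else 0) /
        (if 0 < ∑ u, ρ (u, p.2) then ρ p / ∑ u, ρ (u, p.2) else 0)) =
    ∑ p : U × U, π p * Real.log (π p / ρ p) := by
  have h1 : ∑ p : U × U, π p * Real.log ((∑ v, π (p.1, v)) / ∑ v, ρ (p.1, v)) =
      ∑ p : U × U, π p * Real.log ((∑ u, π (u, p.2)) / ∑ u, ρ (u, p.2)) := by
    rw [← (Equiv.prodComm U U).sum_comp]
    refine Finset.sum_congr rfl fun p _ => ?_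
    simp only [Equiv.prodComm_apply, Prod.fst_swap]
    rw [show π p.swap = π p from hπs p.2 p.1, Finset.sum_congr rfl fun v _ => hπs p.2 v,
      Finset.sum_congr rfl fun v _ => hρs p.2 v]
  rw [h1, ← Finset.sum_add_distrib]
  refine Finset.sum_congr rfl fun p _ => ?_
  by_cases h : π p = 0
  · simp [h]
  have hp : 0 < π p := lt_of_le_of_ne (hπ0 p) (Ne.symm h)
  have hr : 0 < ρ p := lt_of_le_of_ne (hρ0 p) fun h' => h (habs p h'.symm)
  have hp' : 0 < ∑ u, π (u, p.2) :=
    Finset.sum_pos' (fun u _ => hπ0 _) ⟨p.1, Finset.mem_univ _, hp⟩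
  have hr' : 0 < ∑ u, ρ (u, p.2) :=
    Finset.sum_pos' (fun u _ => hρ0 _) ⟨p.1, Finset.mem_univ _, hr⟩
  rw [if_pos hp', if_pos hr', ← mul_add, ← Real.log_mul (by positivity) (by positivity)]
  congr 2
  field_simp

end

/-- **Alternative form of the first term of the rate function (Proposition 5.5).**
If `μ` is a pmf on `T1` with mean degree `β ∈ (0, ∞)`, `η₁` is the law with degree
distribution `Q` and i.i.d. marks, `μ ≪ η₁`, and `μ̄^{1,o}` is symmetric, then, as an
identity in `[0, ∞]`,
`H(μ ‖ η₁) − (β/2)·H(μ̄^{1,o} ‖ η̄₁^{1,o}) = (1/2)(H(μ ‖ μ̌) + H(μ ‖ μ̂))`: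
`H(μ̄^{1,o} ‖ η̄₁^{1,o})` is finite, `H(μ ‖ η₁) = ∞` iff the right-hand side is `∞`,
and when `H(μ ‖ η₁) < ∞` the identity holds in `ℝ`. -/
theorem rate_function_alternative_form_depth_one
    {𝒳 𝒴 : Type} [Fintype 𝒳] [Fintype 𝒴] [DecidableEq 𝒳] [DecidableEq 𝒴]
    (ν : 𝒳 → ℝ) (hν0 : ∀ x, 0 ≤ ν x) (hν1 : ∑ x, ν x = 1)
    (ξ : 𝒴 × 𝒴 → ℝ) (hξ0 : ∀ p, 0 ≤ ξ p) (hξ1 : ∑ p : 𝒴 × 𝒴, ξ p = 1)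
    (Q : ℕ → ℝ) (hQ0 : ∀ k, 0 ≤ Q k) (hQ1 : HasSum Q 1)
    (hQm : Summable fun k : ℕ => (k : ℝ) * Q k)
    (hQpos : 0 < ∑' k : ℕ, (k : ℝ) * Q k)
    (μ : T1 𝒳 𝒴 → ℝ) (hμ0 : ∀ τ, 0 ≤ μ τ) (hμ1 : HasSum μ 1)
    (hβfin : Summable fun τ : T1 𝒳 𝒴 => μ τ * (deg τ : ℝ))
    (hβpos : 0 < meanDeg μ)
    (habs : ∀ τ, eta1 ν ξ Q τ = 0 → μ τ = 0)
    (hsym : ∀ u v : 𝒳 × 𝒴, nbrRoot μ (u, v) = nbrRoot μ (v, u)) :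
    relEnt (nbrRoot μ) (nbrRoot (eta1 ν ξ Q)) ≠ ⊤ ∧
      (relEnt μ (eta1 ν ξ Q) = ⊤ ↔
        (relEnt μ (muCheck ν ξ Q μ) + relEnt μ (muHat ν ξ Q μ)) / 2 = ⊤) ∧
      (relEnt μ (eta1 ν ξ Q) ≠ ⊤ →
        (relEnt μ (eta1 ν ξ Q)).toReal -
            meanDeg μ / 2 * (relEnt (nbrRoot μ) (nbrRoot (eta1 ν ξ Q))).toReal =
          (1 / 2) *
            ((relEnt μ (muCheck ν ξ Q μ)).toReal + (relEnt μ (muHat ν ξ Q μ)).toReal)) := by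
  set η := eta1 ν ξ Q with hη
  have hη0 : ∀ τ, 0 ≤ η τ := eta1_nonneg ν hν0 ξ hξ0 Q hQ0
  set π := nbrRoot μ with hπ
  set ρ := nbrRoot η with hρ
  have hρe : ∀ p, ρ p = ν p.2.1 * (ν p.1.1 * xiBar ξ p.1.2 p.2.2) :=
    eta1_nbrRoot ν hν0 hν1 ξ hξ0 hξ1 Q hQ0 hQm hQpos
  have hπ0 : ∀ p, 0 ≤ π p := fun p =>
    mul_nonneg (one_div_nonneg.2 hβpos.le) (cnt_nonneg μ hμ0 _ _)
  have hρ0 : ∀ p, 0 ≤ ρ p := fun p => by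
    rw [hρe]
    exact mul_nonneg (hν0 _) (mul_nonneg (hν0 _) (xiBar_nonneg ξ hξ0 _ _))
  have hρs : ∀ u v, ρ (u, v) = ρ (v, u) := fun u v => by
    rw [hρe, hρe]
    simp only [xiBar_symm ξ u.2 v.2]
    ring
  have hπ1 : ∑ p, π p = 1 := sum_nbrRoot μ hμ0 hβfin hβpos
  have hηfin := (eta1_deg ν hν0 hν1 ξ hξ0 hξ1 Q hQ0 hQm)
  have hβη : 0 < meanDeg η := by
    have : meanDeg η = ∑' k : ℕ, (k : ℝ) * Q k := hηfin.tsum_eq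
    rw [this]
    exact hQpos
  have hρ1 : ∑ p, ρ p = 1 := sum_nbrRoot η hη0 hηfin.summable hβη
  -- positivity along the support
  have hπpos : ∀ τ, μ τ ≠ 0 → ∀ s ∈ τ.2, 0 < π ((s.1, s.2.1), (τ.1, s.2.2)) := fun τ h s hs =>
    mul_pos (one_div_pos.2 hβpos) (cnt_pos μ hμ0 hβfin τ h s hs)
  have hρpos : ∀ τ, μ τ ≠ 0 → ∀ s ∈ τ.2, 0 < ρ ((s.1, s.2.1), (τ.1, s.2.2)) := fun τ h s hs =>
    mul_pos (one_div_pos.2 hβη)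
      (cnt_pos η hη0 hηfin.summable τ (fun h' => h (habs τ h')) s hs)
  have habs' : ∀ p, ρ p = 0 → π p = 0 := by
    intro p hp
    by_contra hne
    have hc : cnt μ p.2.1 (p.1.1, p.1.2, p.2.2) ≠ 0 := fun h => hne (by
      rw [hπ, nbrRoot_eq, h, mul_zero])
    obtain ⟨m, hm⟩ : ∃ m : Multiset (𝒳 × 𝒴 × 𝒴),
        μ (p.2.1, m) * (m.count (p.1.1, p.1.2, p.2.2) : ℝ) ≠ 0 := by
      by_contra hall
      push Not at hall
      exact hc (by simp [cnt, hall])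
    have hmem : (p.1.1, p.1.2, p.2.2) ∈ m := by
      by_contra hmem
      exact hm (by simp [Multiset.count_eq_zero_of_notMem hmem])
    exact (hρpos (p.2.1, m) (left_ne_zero_of_mul hm) _ hmem).ne' hp
  -- positivity of sums
  have sum1 : ∀ (f : (𝒳 × 𝒴) × (𝒳 × 𝒴) → ℝ), (∀ p, 0 ≤ f p) → ∀ u v, 0 < f (u, v) →
      0 < ∑ v', f (u, v') := fun f hf u v h =>
    Finset.sum_pos' (fun v' _ => hf _) ⟨v, Finset.mem_univ _, h⟩
  have sum2 : ∀ (f : (𝒳 × 𝒴) × (𝒳 × 𝒴) → ℝ), (∀ p, 0 ≤ f p) → ∀ u v, 0 < f (u, v) →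
      0 < ∑ u', f (u', v) := fun f hf u v h =>
    Finset.sum_pos' (fun v' _ => hf _) ⟨u, Finset.mem_univ _, h⟩
  have hcond0 : ∀ (θ : T1 𝒳 𝒴 → ℝ), (∀ p, 0 ≤ nbrRoot θ p) → ∀ u v, 0 ≤ condNbr θ u v := by
    intro θ hθ u v
    unfold condNbr
    split_ifs with h
    · exact div_nonneg (hθ _) h.le
    · exact le_rfl
  have hcondpos : ∀ (θ : T1 𝒳 𝒴 → ℝ), (∀ p, 0 ≤ nbrRoot θ p) → ∀ u v, 0 < nbrRoot θ (u, v) →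
      0 < condNbr θ u v := by
    intro θ hθ u v h
    have h2 : 0 < margO θ v := sum2 _ hθ u v h
    unfold condNbr
    rw [if_pos h2]
    exact div_pos h h2
  have hm0 : ∀ u, 0 ≤ marg1 μ u := fun u => Finset.sum_nonneg fun v _ => hπ0 _
  have hmη0 : ∀ u, 0 ≤ marg1 η u := fun u => Finset.sum_nonneg fun v _ => hρ0 _
  -- the two tilts
  have hcheck : ∀ τ, muCheck ν ξ Q μ τ = η τ * (τ.2.map ((fun _ p =>
      marg1 μ (p.1, p.2.1) / marg1 η (p.1, p.2.1) : 𝒳 → 𝒳 × 𝒴 × 𝒴 → ℝ) τ.1)).prod :=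
    fun τ => rfl
  have hhat : ∀ τ, muHat ν ξ Q μ τ = η τ * (τ.2.map ((fun x p =>
      condNbr μ (p.1, p.2.1) (x, p.2.2) / condNbr η (p.1, p.2.1) (x, p.2.2) :
        𝒳 → 𝒳 × 𝒴 × 𝒴 → ℝ) τ.1)).prod :=
    fun τ => rfl
  obtain ⟨hcA, hcS, hcE⟩ := tilt μ η hμ0 hβfin habs (fun _ p =>
    marg1 μ (p.1, p.2.1) / marg1 η (p.1, p.2.1) : 𝒳 → 𝒳 × 𝒴 × 𝒴 → ℝ) (fun τ h s hs =>
    div_pos (sum1 π hπ0 _ _ (hπpos τ h s hs)) (sum1 ρ hρ0 _ _ (hρpos τ h s hs))) (muCheck ν ξ Q μ) hcheck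
  obtain ⟨hhA, hhS, hhE⟩ := tilt μ η hμ0 hβfin habs (fun x p =>
    condNbr μ (p.1, p.2.1) (x, p.2.2) / condNbr η (p.1, p.2.1) (x, p.2.2) :
    𝒳 → 𝒳 × 𝒴 × 𝒴 → ℝ) (fun τ h s hs =>
    div_pos (hcondpos μ hπ0 _ _ (hπpos τ h s hs)) (hcondpos η hρ0 _ _ (hρpos τ h s hs))) (muHat ν ξ Q μ) hhat
  -- sub-probability
  obtain ⟨hc0, hc1, hc2⟩ := subprob ν hν0 hν1 ξ hξ0 Q hQ0 hQ1 (fun _ p =>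
    marg1 μ (p.1, p.2.1) / marg1 η (p.1, p.2.1) : 𝒳 → 𝒳 × 𝒴 × 𝒴 → ℝ)
    (fun _ s => div_nonneg (hm0 _) (hmη0 _))
    (fun x _ => check_sum ν hν1 ξ (marg1 μ) (marg1 η) hm0
      ((Fintype.sum_prod_type π).symm.trans hπ1)
      (fun u => by
        simp only [marg1]
        rw [Finset.sum_congr rfl fun v _ => hρe (u, v), Fintype.sum_prod_type]
        simp only [← Finset.mul_sum]
        rw [← Finset.sum_mul, hν1, one_mul])) (muCheck ν ξ Q μ) hcheck
  obtain ⟨hh0, hh1, hh2⟩ := subprob ν hν0 hν1 ξ hξ0 Q hQ0 hQ1 (fun x p =>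
    condNbr μ (p.1, p.2.1) (x, p.2.2) / condNbr η (p.1, p.2.1) (x, p.2.2) :
    𝒳 → 𝒳 × 𝒴 × 𝒴 → ℝ)
    (fun x s => div_nonneg (hcond0 μ hπ0 _ _) (hcond0 η hρ0 _ _))
    (fun x hx => hat_sum ν hν0 ξ hξ0 hξ1 x (fun u y' => condNbr μ u (x, y'))
      (fun u y' => condNbr η u (x, y')) (fun u y' => hcond0 μ hπ0 _ _)
      (fun y' => by
        unfold condNbr
        split_ifs with h
        · rw [← Finset.sum_div]
          exact div_self_le_one _
        · simp)
      (fun u y' => by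
        have h1 : margO η (x, y') = ν x * ∑ y, xiBar ξ y y' := by
          simp only [margO]
          rw [Finset.sum_congr rfl fun v _ => hρe (v, (x, y')), Fintype.sum_prod_type]
          simp only [← Finset.mul_sum]
          rw [← Finset.sum_mul, hν1, one_mul]
        have hx' : 0 < ν x := lt_of_le_of_ne (hν0 x) (Ne.symm hx)
        have hD : 0 ≤ ∑ y, xiBar ξ y y' :=
          Finset.sum_nonneg fun y _ => xiBar_nonneg ξ hξ0 y y'
        have h2 : nbrRoot η (u, (x, y')) = _ := hρe (u, (x, y'))
        unfold condNbr
        rw [h1, h2]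
        split_ifs with h
        · simp only
          rw [mul_div_mul_left _ _ hx]
        · have : ∑ y, xiBar ξ y y' = 0 := by
            by_contra hne
            exact h (mul_pos hx' (lt_of_le_of_ne hD (Ne.symm hne)))
          rw [this, div_zero])) (muHat ν ξ Q μ) hhat
  obtain ⟨-, he1, he2⟩ := subprob ν hν0 hν1 ξ hξ0 Q hQ0 hQ1 (fun _ _ => 1)
    (fun _ _ => zero_le_one) (fun x _ => by simp [sum_wgt ν hν1 ξ hξ1]) η
    (fun τ => by simp [hη])
  -- the finite relative entropy
  have hfS : Summable fun p => π p * Real.log (π p / ρ p) := (hasSum_fintype _).summable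
  obtain ⟨hf1, hf2⟩ := relEnt_of π ρ habs' hfS
    (relEnt_tsum_nonneg π ρ hπ0 hρ0 (hπ1 ▸ hasSum_fintype π) (hasSum_fintype ρ).summable
      (by rw [tsum_fintype, hρ1]) habs' hfS)
  rw [tsum_fintype] at hf2
  by_cases hS : Summable (fun τ => μ τ * Real.log (μ τ / η τ))
  · obtain ⟨ha1, ha2⟩ := relEnt_of μ η habs hS
      (relEnt_tsum_nonneg μ η hμ0 hη0 hμ1 he1 he2 habs hS)
    obtain ⟨hb1, hb2⟩ := relEnt_of μ _ hcA (hcS.2 hS)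
      (relEnt_tsum_nonneg μ _ hμ0 hc0 hμ1 hc1 hc2 hcA (hcS.2 hS))
    obtain ⟨hd1, hd2⟩ := relEnt_of μ _ hhA (hhS.2 hS)
      (relEnt_tsum_nonneg μ _ hμ0 hh0 hμ1 hh1 hh2 hhA (hhS.2 hS))
    refine ⟨hf1, ⟨fun h => absurd h ha1, fun h => ?_⟩, fun _ => ?_⟩
    · exact absurd h (ENNReal.div_ne_top (ENNReal.add_ne_top.2 ⟨hb1, hd1⟩) two_ne_zero)
    · rw [ha2, hb2, hd2, hf2, hcE hS, hhE hS, sum_reindex, sum_reindex]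
      have hid := fin_identity π ρ hπ0 hρ0 hsym hρs habs'
      have hcnt : ∀ p : (𝒳 × 𝒴) × (𝒳 × 𝒴),
          cnt μ p.2.1 (p.1.1, p.1.2, p.2.2) = meanDeg μ * π p := by
        intro p
        rw [hπ, nbrRoot_eq]
        field_simp
      simp only [hcnt, mul_assoc]
      rw [← Finset.mul_sum, ← Finset.mul_sum, ← hid]
      simp only [marg1, condNbr, margO, ← hπ, ← hρ]
      ring
  · have hb := relEnt_top μ _ (mt hcS.1 hS)
    have ha := relEnt_top μ _ hS
    refine ⟨hf1, ⟨fun _ => ?_, fun _ => ha⟩, fun h => absurd ha h⟩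
    rw [hb, top_add]
    exact ENNReal.top_div_of_ne_top (by simp)
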